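/- Let n ≥ 3. Then the polynomial identity H_{2,n}^{({1,1})}(x) = 16(n−1)·(−2x·H_{n−1}(x) + (n(2x²+1)−2)·H_{n−2}(x)) holds for all x. -/

import Mathlib

open Polynomial

/-- Physicists' Hermite polynomials: `H_0 = 1`, `H_n = 2x H_{n-1} - H_{n-1}'`. -/
noncomputable def hermitePhys : ℕ → Polynomial ℝ
  | 0 => 1
  | n + 1 => 2 * Polynomial.X * hermitePhys n - Polynomial.derivative (hermitePhys n)

/-- Exceptional `X_2`-Hermite polynomial for the partition `{1,1}`. -/
noncomputable def XHerm (n : ℕ) (x : ℝ) : ℝ :=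
  Matrix.det
    !![2 * x, 4 * x ^ 2 - 2, (hermitePhys n).eval x;
       2, 8 * x, ((hermitePhys n).derivative).eval x;
       0, 8, ((hermitePhys n).derivative.derivative).eval x]

/-!
Cofactor expansion along the last column turns the Wronskian with `H_1`, `H_2` into the operator
`4 (2x² + 1) D² - 16 x D + 16`. The lowering relation `D H_n = 2n H_{n-1}` and the three-term
recurrence it implies then express the result through `H_{n-1}` and `H_{n-2}`.
-/

theorem hermitePhys_succ (n : ℕ) :
    hermitePhys (n + 1) = 2 * X * hermitePhys n - derivative (hermitePhys n) :=
  rfl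

theorem derivative_hermitePhys_succ (n : ℕ) :
    derivative (hermitePhys (n + 1)) = ((2 * (n + 1) : ℕ) : ℝ[X]) * hermitePhys n := by
  induction n with
  | zero => simp [hermitePhys]
  | succ n ih =>
    calc derivative (hermitePhys (n + 2))
        = 2 * hermitePhys (n + 1) + (2 * X * derivative (hermitePhys (n + 1))
            - derivative (derivative (hermitePhys (n + 1)))) := by
          rw [hermitePhys_succ (n + 1)]
          simp only [derivative_sub, derivative_mul, derivative_ofNat, derivative_X]
          ring
      _ = 2 * hermitePhys (n + 1) + ((2 * (n + 1) : ℕ) : ℝ[X]) *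
            (2 * X * hermitePhys n - derivative (hermitePhys n)) := by
          rw [ih, derivative_natCast_mul]
          ring
      _ = ((2 * (n + 1 + 1) : ℕ) : ℝ[X]) * hermitePhys (n + 1) := by
          rw [← hermitePhys_succ]
          push_cast
          ring

theorem derivative_derivative_hermitePhys_add_two (n : ℕ) :
    derivative (derivative (hermitePhys (n + 2))) =
      ((4 * (n + 2) * (n + 1) : ℕ) : ℝ[X]) * hermitePhys n := by
  rw [derivative_hermitePhys_succ, derivative_natCast_mul, derivative_hermitePhys_succ]
  push_cast
  ring

theorem hermitePhys_add_two (n : ℕ) :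
    hermitePhys (n + 2) =
      2 * X * hermitePhys (n + 1) - ((2 * (n + 1) : ℕ) : ℝ[X]) * hermitePhys n := by
  rw [hermitePhys_succ (n + 1), derivative_hermitePhys_succ]

theorem XHerm_eq_second_order_operator (n : ℕ) (x : ℝ) :
    XHerm n x =
      4 * (2 * x ^ 2 + 1) * (derivative (derivative (hermitePhys n))).eval x
        - 16 * x * (derivative (hermitePhys n)).eval x + 16 * (hermitePhys n).eval x := by
  simp only [XHerm, Matrix.det_fin_three, Matrix.of_apply, Matrix.cons_val]
  ring

theorem stmt13 (n : ℕ) (hn : 3 ≤ n) :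
    ∀ x : ℝ,
      XHerm n x =
        16 * ((n : ℝ) - 1) *
          (-(2 * x * (hermitePhys (n - 1)).eval x)
            + ((n : ℝ) * (2 * x ^ 2 + 1) - 2) * (hermitePhys (n - 2)).eval x) := by
  intro x
  obtain ⟨m, rfl⟩ : ∃ m, n = m + 2 := Nat.exists_eq_add_of_le' (by lia)
  rw [XHerm_eq_second_order_operator, derivative_derivative_hermitePhys_add_two,
    derivative_hermitePhys_succ, hermitePhys_add_two, Nat.add_sub_cancel,
    show m + 2 - 1 = m + 1 from rfl]
  simp only [eval_sub, eval_mul, eval_X, eval_ofNat, eval_natCast]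
  push_cast
  ring
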